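/- arXiv:1507.01308 — 2 statements merged into one kernel-verified Lean document; each statement's English description precedes it below -/
import Mathlib

section
/- Let Ω ⊆ ℝ^{m1×m2} be a nonempty bounded set (Frobenius norm), let n be a positive integer with n > lower Minkowski dimension of Ω, and let F ∈ ℂ^{n×n} be the unitary DFT matrix, F_{jk} = n^{−1/2} exp(−2πi(j−1)(k−1)/n) for 1 ≤ j,k ≤ n. Then for Lebesgue-almost all pairs of real matrices (D, E) ∈ ℝ^{n×m1} × ℝ^{n×m2}, there does not exist M ∈ Ω with M ≠ 0 such that for every j = 1, …, n the j-th diagonal entry of the complex matrix F D M Eᵀ Fᵀ equals 0 (equivalently, (FD)^{(j,:)} M ((FE)^{(j,:)})ᵀ = 0 for all j, where (FD)^{(j,:)} denotes the j-th row of FD). -/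
/-!
The DFT turns cyclic convolution into a pointwise product, so the `n` complex measurements
`(FD)_j M (FE)_jᵀ` vanish exactly when the real vector `g(M, D, E) = ∑ M_{ik} D_i * E_k`, a sum of
cyclic convolutions of columns, vanishes (`convSum_eq_zero`). This vector has `n` real coordinates,
and the theorem follows by covering `Ω` and a union bound (`volume_bad_eq_zero`): if `M` is a zero
of `g(·, D, E)` then `|g(c, D, E)|` is of order `ρ` at each `c` at distance `ρ` from `M`. For some
`d < n` and arbitrarily small `ρ`, the set `Ω` is covered by `ρ ^ (-d)` balls of radius `ρ`. It
therefore suffices that for each `s < 1` the set of bounded `(D, E)` with `|g(M, D, E)| ≤ δ` has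
measure `O(δ ^ (n s))`, uniformly over the `M` with entries bounded and `|M_{ik}| ≥ η` for a fixed
entry `(i, k)` (`volume_smallBall_le`). Countably many choices of `(i, k)`, `η` and of the bound on
`(D, E)` exhaust all nonzero `M` and all `(D, E)`.

For the small-ball estimate only column `i` of `D` and column `k` of `E` are moved. As a function of
column `k` of `E`, the vector `g` is affine with linear part a circulant matrix `circ x`, where `x`
is affine in column `i` of `D` with slope `M_{ik}`. Its slices have volume at most
`2 ^ n * (δ ^ n / |det (circ x)|) ^ s`. The determinant of `circ x` is the product of the complex
numbers `(F x)_j`, and `|(F x)_j|` is at least half of the `j`-th coordinate of the Hartley transform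
of `x` (`prod_hartley_le_det`). The Hartley transform is real and invertible, so after a linear
change of variables the remaining integral is a product of integrals of `|t| ^ (-s)` over bounded
intervals, which are finite since `s < 1`. Fixing the other columns amounts to averaging over
translations (`volume_le_of_translates`).
-/

open MeasureTheory Filter

/-- Covering number: the minimal number of closed balls of radius `ρ`
(with arbitrary centers) needed to cover `Ω`. -/
noncomputable def coveringNumber {X : Type*} [PseudoMetricSpace X] (Ω : Set X) (ρ : ℝ) : ℕ :=
  sInf {k : ℕ | ∃ C : Finset X, C.card = k ∧ Ω ⊆ ⋃ c ∈ C, Metric.closedBall c ρ}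

/-- Lower Minkowski dimension: `liminf_{ρ → 0⁺} log N_Ω(ρ) / log (1/ρ)`. -/
noncomputable def lowerMinkowskiDim {X : Type*} [PseudoMetricSpace X] (Ω : Set X) : ℝ :=
  Filter.liminf (fun ρ : ℝ => Real.log (coveringNumber Ω ρ) / Real.log (1 / ρ))
    (nhdsWithin 0 (Set.Ioi 0))

/-- The unitary DFT matrix: `F_{jk} = n^{-1/2} exp(-2πi·j·k/n)` (0-indexed). -/
noncomputable def dftMatrix (n : ℕ) : Fin n → Fin n → ℂ :=
  fun j k => ((1 / Real.sqrt n : ℝ) : ℂ) *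
    Complex.exp (-(2 * (Real.pi : ℂ)) * Complex.I * ((j : ℕ) : ℂ) * ((k : ℕ) : ℂ) / (n : ℂ))

/-! ### Fourier and Hartley matrices, circulant determinants -/

/-- The unnormalised discrete Fourier matrix `ζ ^ (j k)` for a given root of unity `ζ`. -/
def fourierMat (n : ℕ) (ζ : ℂ) : Matrix (Fin n) (Fin n) ℂ :=
  Matrix.of fun j k => ζ ^ ((j : ℕ) * (k : ℕ))

/-- The primitive `n`-th root of unity `exp (-2πi / n)` of the discrete Fourier transform. -/
noncomputable def dftRoot (n : ℕ) : ℂ := (Complex.exp (2 * (Real.pi : ℂ) * Complex.I / n))⁻¹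

lemma dftRoot_primitive (n : ℕ) (hn : 0 < n) : IsPrimitiveRoot (dftRoot n) n :=
  (Complex.isPrimitiveRoot_exp n hn.ne').inv

lemma dftMatrix_eq (n : ℕ) (j k : Fin n) :
    dftMatrix n j k = ((1 / Real.sqrt n : ℝ) : ℂ) * fourierMat n (dftRoot n) j k := by
  simp only [dftMatrix, fourierMat, dftRoot, Matrix.of_apply]
  rw [← Complex.exp_neg, ← Complex.exp_nat_mul]
  congr 2
  push_cast
  ring

lemma fourierMat_det_ne_zero {n : ℕ} {ζ : ℂ} (hζ : IsPrimitiveRoot ζ n) :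
    (fourierMat n ζ).det ≠ 0 := by
  have : fourierMat n ζ = Matrix.vandermonde fun j : Fin n => ζ ^ (j : ℕ) := by
    ext j k
    simp [fourierMat, Matrix.vandermonde_apply, pow_mul]
  rw [this, Matrix.det_vandermonde_ne_zero_iff]
  intro a b h
  exact Fin.ext (hζ.pow_inj a.2 b.2 h)

lemma fourierMat_add {n : ℕ} {ζ : ℂ} (hζ : IsPrimitiveRoot ζ n) (j a b : Fin n) :
    fourierMat n ζ j (a + b) = fourierMat n ζ j a * fourierMat n ζ j b := by
  simp only [fourierMat, Matrix.of_apply, ← pow_add, ← mul_add, Fin.val_add]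
  rw [mul_comm, mul_comm (j : ℕ), pow_mul, pow_mul]
  congr 1
  conv_rhs => rw [← Nat.mod_add_div ((a : ℕ) + b) n, pow_add, pow_mul, hζ.pow_eq_one]
  simp

/-- The convolution theorem: the Fourier matrix diagonalises circulant matrices. -/
lemma fourierMat_mulVec_circulant {n : ℕ} [NeZero n] {ζ : ℂ} (hζ : IsPrimitiveRoot ζ n)
    (x : Fin n → ℂ) :
    fourierMat n ζ * Matrix.circulant x =
      Matrix.diagonal ((fourierMat n ζ).mulVec x) * fourierMat n ζ := by
  ext j l
  rw [Matrix.diagonal_mul, Matrix.mul_apply, Matrix.mulVec, dotProduct, Finset.sum_mul,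
    ← Fintype.sum_equiv (Equiv.addRight l) _ _ fun _ => rfl]
  refine Finset.sum_congr rfl fun r _ => ?_
  simp only [Equiv.coe_addRight, Matrix.circulant_apply, add_sub_cancel_right]
  rw [fourierMat_add hζ]
  ring

lemma det_circulant_eq {n : ℕ} [NeZero n] {ζ : ℂ} (hζ : IsPrimitiveRoot ζ n) (x : Fin n → ℂ) :
    (Matrix.circulant x).det = ∏ j, (fourierMat n ζ).mulVec x j := by
  have h := congrArg Matrix.det (fourierMat_mulVec_circulant hζ x)
  rw [Matrix.det_mul, Matrix.det_mul, Matrix.det_diagonal, mul_comm] at h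
  exact mul_right_cancel₀ (fourierMat_det_ne_zero hζ) h

/-- The Hartley matrix `cos + sin`, the real counterpart of the Fourier matrix. -/
def hartleyMat (n : ℕ) (ζ : ℂ) : Matrix (Fin n) (Fin n) ℝ :=
  Matrix.of fun j k => (fourierMat n ζ j k).re - (fourierMat n ζ j k).im

lemma fourierMat_neg {n : ℕ} [NeZero n] {ζ : ℂ} (hζ : IsPrimitiveRoot ζ n) (j k : Fin n) :
    fourierMat n ζ (-j) k = (starRingEnd ℂ) (fourierMat n ζ j k) := by
  have hsymm : ∀ a b, fourierMat n ζ a b = fourierMat n ζ b a := fun a b => by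
    simp [fourierMat, mul_comm]
  have h1 : fourierMat n ζ k (-j) * fourierMat n ζ k j = 1 := by
    rw [← fourierMat_add hζ, neg_add_cancel]
    simp [fourierMat]
  have hn : ‖fourierMat n ζ k j‖ = 1 := by
    simp [fourierMat, hζ.norm'_eq_one (NeZero.ne n)]
  rw [hsymm (-j), hsymm j, ← Complex.inv_eq_conj hn]
  exact eq_inv_of_mul_eq_one_left h1

lemma hartleyMat_mulVec {n : ℕ} (ζ : ℂ) (x : Fin n → ℝ) (j : Fin n) :
    (hartleyMat n ζ).mulVec x j =
      ((fourierMat n ζ).mulVec (fun l => (x l : ℂ)) j).re -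
        ((fourierMat n ζ).mulVec (fun l => (x l : ℂ)) j).im := by
  simp [Matrix.mulVec, dotProduct, hartleyMat, sub_mul, Finset.sum_sub_distrib]

/-- The Hartley transform of `x` at `j` and `-j` determines the Fourier transform of `x` at `j`,
as `x` is real. -/
lemma hartleyMat_det_ne_zero {n : ℕ} [NeZero n] {ζ : ℂ} (hζ : IsPrimitiveRoot ζ n) :
    (hartleyMat n ζ).det ≠ 0 := by
  intro h
  obtain ⟨x, hx, hx0⟩ := Matrix.exists_mulVec_eq_zero_iff.mpr h
  apply hx
  have hconj : ∀ j, (fourierMat n ζ).mulVec (fun l => (x l : ℂ)) (-j) =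
      (starRingEnd ℂ) ((fourierMat n ζ).mulVec (fun l => (x l : ℂ)) j) := fun j => by
    simp [Matrix.mulVec, dotProduct, fourierMat_neg hζ]
  have hz : (fourierMat n ζ).mulVec (fun l => (x l : ℂ)) = 0 := by
    ext1 j
    have h1 := hartleyMat_mulVec ζ x j
    have h2 := hartleyMat_mulVec ζ x (-j)
    rw [hx0, Pi.zero_apply] at h1 h2
    rw [hconj, Complex.conj_re, Complex.conj_im] at h2
    apply Complex.ext <;> simp <;> linarith
  have := Matrix.eq_zero_of_mulVec_eq_zero (fourierMat_det_ne_zero hζ) hz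
  ext l
  simpa using congrFun this l

/-- The determinant of a real circulant matrix is bounded below by the product of the coordinates
of its Hartley transform, because `|re z - im z| ≤ 2 ‖z‖`. -/
lemma prod_hartley_le_det {n : ℕ} [NeZero n] {ζ : ℂ} (hζ : IsPrimitiveRoot ζ n) (x : Fin n → ℝ) :
    ∏ j, |(hartleyMat n ζ).mulVec x j| ≤ 2 ^ n * |(Matrix.circulant x).det| := by
  have h1 : |(Matrix.circulant x).det| =
      ∏ j, ‖(fourierMat n ζ).mulVec (fun l => (x l : ℂ)) j‖ := by
    rw [← norm_prod, ← det_circulant_eq hζ, ← Real.norm_eq_abs, ← Complex.norm_real]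
    congr 1
    rw [← Complex.ofRealHom_eq_coe, RingHom.map_det, RingHom.mapMatrix_apply, Matrix.map_circulant]
    rfl
  have h2 : (2 : ℝ) ^ n = ∏ _j : Fin n, (2 : ℝ) := by simp
  rw [h1, h2, ← Finset.prod_mul_distrib]
  refine Finset.prod_le_prod (fun _ _ => abs_nonneg _) fun j _ => ?_
  rw [hartleyMat_mulVec]
  have := abs_sub (((fourierMat n ζ).mulVec (fun l => (x l : ℂ)) j).re)
    (((fourierMat n ζ).mulVec (fun l => (x l : ℂ)) j).im)
  have := Complex.abs_re_le_norm ((fourierMat n ζ).mulVec (fun l => (x l : ℂ)) j)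
  have := Complex.abs_im_le_norm ((fourierMat n ζ).mulVec (fun l => (x l : ℂ)) j)
  linarith

/-- The real form of the measurement: the sum of the cyclic convolutions of the columns of `D` and
`E`, weighted by the entries of `M`. -/
def convSum {n m1 m2 : ℕ} (M : EuclideanSpace ℝ (Fin m1 × Fin m2)) (D : Fin n → Fin m1 → ℝ)
    (E : Fin n → Fin m2 → ℝ) : Fin n → ℝ :=
  ∑ i, ∑ k, M (i, k) • (Matrix.circulant fun l => D l i).mulVec fun l => E l k

/-- The DFT measurements vanish only if the real cyclic convolution does. -/
lemma convSum_eq_zero {n m1 m2 : ℕ} (hn : 0 < n) (M : EuclideanSpace ℝ (Fin m1 × Fin m2))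
    (D : Fin n → Fin m1 → ℝ) (E : Fin n → Fin m2 → ℝ)
    (h : ∀ j : Fin n, ∑ i : Fin m1, ∑ k : Fin m2,
          (∑ l : Fin n, dftMatrix n j l * (D l i : ℂ)) * (M (i, k) : ℂ) *
            (∑ l : Fin n, dftMatrix n j l * (E l k : ℂ)) = 0) :
    convSum M D E = 0 := by
  have : NeZero n := ⟨hn.ne'⟩
  have hζ := dftRoot_primitive n hn
  set ζ := dftRoot n
  have hs : ((1 / Real.sqrt n : ℝ) : ℂ) ≠ 0 := by
    have : 0 < Real.sqrt n := Real.sqrt_pos.mpr (by exact_mod_cast hn)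
    exact_mod_cast (by positivity : (1 / Real.sqrt n : ℝ) ≠ 0)
  have hmv : ∀ (j : Fin n) (v : Fin n → ℝ), ∑ l, dftMatrix n j l * (v l : ℂ) =
      ((1 / Real.sqrt n : ℝ) : ℂ) * (fourierMat n ζ).mulVec (fun l => (v l : ℂ)) j := by
    intro j v
    simp only [Matrix.mulVec, dotProduct, Finset.mul_sum, dftMatrix_eq, mul_assoc, ζ]
  have hcirc : ∀ (x y : Fin n → ℝ),
      (fun l => (((Matrix.circulant x).mulVec y l : ℝ) : ℂ)) =
        (Matrix.circulant fun l => (x l : ℂ)).mulVec fun l => (y l : ℂ) := by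
    intro x y
    ext r
    simp [Matrix.mulVec, dotProduct]
  have hF : (fourierMat n ζ).mulVec (fun l => (convSum M D E l : ℂ)) = 0 := by
    have e1 : (fun l => (convSum M D E l : ℂ)) = ∑ i, ∑ k, (M (i, k) : ℂ) •
        ((Matrix.circulant fun l => (D l i : ℂ)).mulVec fun l => (E l k : ℂ)) := by
      simp_rw [← hcirc]
      ext r
      simp [convSum]
    rw [e1]
    ext1 j
    have hj := h j
    simp_rw [hmv j (fun l => D l _), hmv j (fun l => E l _)] at hj
    rw [Matrix.mulVec_sum]
    simp_rw [Matrix.mulVec_sum, Matrix.mulVec_smul, Matrix.mulVec_mulVec,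
      fourierMat_mulVec_circulant hζ, ← Matrix.mulVec_mulVec]
    have hs2 := mul_ne_zero hs hs
    refine (mul_eq_zero.mp ?_).resolve_left hs2
    rw [← hj]
    simp only [Finset.sum_apply, Pi.smul_apply, smul_eq_mul, Matrix.mulVec_diagonal,
      Finset.mul_sum]
    refine Finset.sum_congr rfl fun i _ => Finset.sum_congr rfl fun k _ => ?_
    ring
  have := Matrix.eq_zero_of_mulVec_eq_zero (fourierMat_det_ne_zero hζ) hF
  ext r
  simpa using congrFun this r

open scoped ENNReal

/-! ### Volume of slices and the singular weight -/

lemma min_one_le_rpow (x : ℝ≥0∞) {s : ℝ} (h0 : 0 < s) (h1 : s < 1) :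
    min 1 x ≤ x ^ s := by
  rcases le_total x 1 with h | h
  · rw [min_eq_right h]
    simpa using ENNReal.rpow_le_rpow_of_exponent_ge h h1.le
  · rw [min_eq_left h]
    exact ENNReal.one_le_rpow h h0

/-- The part of the unit cube on which an affine map with linear part `A` is small has volume at
most `2 ^ n * min 1 (δ ^ n / |det A|)`; interpolating with an exponent `s < 1` makes the bound
integrable in `A`. If `det A = 0` the right-hand side is infinite. -/
lemma volume_affine_slice_le {n : ℕ} (A : Matrix (Fin n) (Fin n) ℝ) (c : Fin n → ℝ) {δ : ℝ}
    (hδ : 0 < δ) {s : ℝ} (h0 : 0 < s) (h1 : s < 1) :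
    volume {q : Fin n → ℝ | ‖q‖ ≤ 1 ∧ ∀ r, |c r + A.mulVec q r| ≤ δ} ≤
      2 ^ n * (ENNReal.ofReal δ ^ n / ENNReal.ofReal |A.det|) ^ s := by
  have hb1 : volume {q : Fin n → ℝ | ‖q‖ ≤ 1 ∧ ∀ r, |c r + A.mulVec q r| ≤ δ} ≤ 2 ^ n := by
    calc _ ≤ volume (Metric.closedBall (0 : Fin n → ℝ) 1) :=
          measure_mono fun q hq => by simpa using hq.1
      _ = 2 ^ n := by
          rw [Real.volume_pi_closedBall _ zero_le_one]
          simp [ENNReal.ofReal_pow]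
  by_cases hA : A.det = 0
  · have : (ENNReal.ofReal δ ^ n / ENNReal.ofReal |A.det|) ^ s = ∞ := by
      rw [hA, abs_zero, ENNReal.ofReal_zero, ENNReal.div_zero, ENNReal.top_rpow_of_pos h0]
      simp [hδ]
    rw [this, ENNReal.mul_top (by simp)]
    exact le_top
  · have hdet : LinearMap.det (Matrix.toLin' A) ≠ 0 := by rwa [LinearMap.det_toLin']
    have hb2 : volume {q : Fin n → ℝ | ‖q‖ ≤ 1 ∧ ∀ r, |c r + A.mulVec q r| ≤ δ} ≤
        2 ^ n * (ENNReal.ofReal δ ^ n / ENNReal.ofReal |A.det|) := by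
      calc _ ≤ volume (Matrix.toLin' A ⁻¹' (Metric.closedBall (-c) δ)) := by
            refine measure_mono fun q hq => ?_
            rw [Set.mem_preimage, mem_closedBall_iff_norm, pi_norm_le_iff_of_nonneg hδ.le]
            intro r
            have := hq.2 r
            simpa [add_comm] using this
        _ = _ := by
            rw [Measure.addHaar_preimage_linearMap _ hdet, LinearMap.det_toLin',
              Real.volume_pi_closedBall _ hδ.le, abs_inv,
              ENNReal.ofReal_inv_of_pos (abs_pos.mpr hA), mul_pow,
              ENNReal.ofReal_mul (by positivity), ENNReal.ofReal_pow hδ.le, ENNReal.div_eq_inv_mul]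
            simp [ENNReal.ofReal_pow]
            ring
    calc _ ≤ min (2 ^ n * 1) (2 ^ n * (ENNReal.ofReal δ ^ n / ENNReal.ofReal |A.det|)) :=
          le_min (by simpa using hb1) hb2
      _ = 2 ^ n * min 1 (ENNReal.ofReal δ ^ n / ENNReal.ofReal |A.det|) :=
          (mul_min _ _ _).symm
      _ ≤ _ := by
          gcongr
          exact min_one_le_rpow _ h0 h1

/-- The singular weight `∏ j, |y j| ^ (-s)`, infinite on the coordinate hyperplanes. -/
noncomputable def singWeight {n : ℕ} (s : ℝ) (y : Fin n → ℝ) : ℝ≥0∞ :=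
  ∏ j, ENNReal.ofReal |y j| ^ (-s)

lemma measurable_singWeight {n : ℕ} (s : ℝ) : Measurable (singWeight (n := n) s) := by
  unfold singWeight
  fun_prop

lemma lintegral_singWeight_lt_top (n : ℕ) (K : ℝ) {s : ℝ} (h1 : s < 1) :
    ∫⁻ y in Metric.closedBall (0 : Fin n → ℝ) K, singWeight s y < ∞ := by
  rcases lt_or_ge K 0 with hK | hK
  · simp [Metric.closedBall_eq_empty.mpr hK]
  have hint : IntegrableOn (fun t : ℝ => |t| ^ (-s)) (Set.uIoc (-K) K) := by
    have h := (intervalIntegral.intervalIntegrable_cpow' (a := -K) (b := K)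
      (r := ((-s : ℝ) : ℂ)) (by simp; linarith)).norm
    rw [intervalIntegrable_iff] at h
    refine h.congr_fun (fun t _ => ?_) measurableSet_uIoc
    simp only [Complex.norm_cpow_real, Complex.norm_real, Real.norm_eq_abs]
  rw [Set.uIoc_of_le (by linarith), ← integrableOn_Icc_iff_integrableOn_Ioc] at hint
  have hi2 : Integrable ((Set.Icc (-K) K).indicator fun t : ℝ => |t| ^ (-s)) :=
    (integrable_indicator_iff measurableSet_Icc).mpr hint
  have hi3 := Integrable.fintype_prod (ι := Fin n) (f := fun _ => (Set.Icc (-K) K).indicator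
    fun t : ℝ => |t| ^ (-s)) (μ := fun _ => volume) fun _ => hi2
  have hne : ∀ᵐ y : Fin n → ℝ, ∀ j, y j ≠ 0 := by
    rw [ae_all_iff]
    intro j
    rw [ae_iff]
    simp only [not_not]
    exact Measure.pi_hyperplane (fun _ : Fin n => (volume : Measure ℝ)) j 0
  rw [← lintegral_indicator Metric.isClosed_closedBall.measurableSet]
  refine lt_of_le_of_lt (lintegral_mono_ae ?_) hi3.lintegral_lt_top
  filter_upwards [hne] with y hy
  by_cases hmem : y ∈ Metric.closedBall (0 : Fin n → ℝ) K
  · rw [Set.indicator_of_mem hmem, singWeight, ENNReal.ofReal_prod_of_nonneg]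
    · refine Finset.prod_le_prod' fun j _ => ?_
      have hj : y j ∈ Set.Icc (-K) K := by
        rw [mem_closedBall_zero_iff, pi_norm_le_iff_of_nonneg hK] at hmem
        exact abs_le.mp (hmem j)
      rw [Set.indicator_of_mem hj, ENNReal.ofReal_rpow_of_pos (abs_pos.mpr (hy j))]
    · intro j _
      exact Set.indicator_nonneg (fun _ _ => by positivity) _
  · simp [Set.indicator_of_notMem hmem]

/-- The singular weight in Hartley coordinates is integrable over a cube, uniformly over affine
reparametrisations whose scale stays away from `0` and `∞`. -/
lemma lintegral_singWeight_comp_le {n : ℕ} (H : Matrix (Fin n) (Fin n) ℝ) (hH : H.det ≠ 0)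
    {s : ℝ} (h1 : s < 1) (K : ℝ) {η : ℝ} (hη : 0 < η) :
    ∃ C : ℝ≥0∞, C ≠ ∞ ∧ ∀ (a : ℝ) (b : Fin n → ℝ), η ≤ |a| → |a| ≤ K → ‖b‖ ≤ K →
      ∫⁻ p in Metric.closedBall (0 : Fin n → ℝ) 1, singWeight s (H.mulVec (b + a • p)) ≤ C := by
  set T := (Matrix.toLin' H).toContinuousLinearMap with hT
  have hTv : ∀ v, T v = H.mulVec v := fun v => by simp [hT]
  set K' := ‖T‖ * (K + K)
  refine ⟨ENNReal.ofReal (η ^ n * |H.det|)⁻¹ *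
    ∫⁻ y in Metric.closedBall (0 : Fin n → ℝ) K', singWeight s y,
    ENNReal.mul_ne_top ENNReal.ofReal_ne_top (lintegral_singWeight_lt_top n K' h1).ne,
    fun a b ha haK hb => ?_⟩
  have ha0 : a ≠ 0 := abs_pos.mp (hη.trans_le ha)
  have hdet : (a • H).det ≠ 0 := by
    rw [Matrix.det_smul]
    exact mul_ne_zero (pow_ne_zero _ ha0) hH
  set g : (Fin n → ℝ) → ℝ≥0∞ := (Metric.closedBall (0 : Fin n → ℝ) K').indicator (singWeight s)
    with hg
  have hgm : Measurable g :=
    (measurable_singWeight s).indicator Metric.isClosed_closedBall.measurableSet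
  have hle : ∫⁻ p in Metric.closedBall (0 : Fin n → ℝ) 1, singWeight s (H.mulVec (b + a • p)) ≤
      ∫⁻ p, g (Matrix.toLin' (a • H) p + H.mulVec b) := by
    rw [← lintegral_indicator Metric.isClosed_closedBall.measurableSet]
    refine lintegral_mono fun p => ?_
    by_cases hp : p ∈ Metric.closedBall (0 : Fin n → ℝ) 1
    · have e : Matrix.toLin' (a • H) p + H.mulVec b = H.mulVec (b + a • p) := by
        rw [Matrix.toLin'_apply, Matrix.mulVec_add, Matrix.mulVec_smul, Matrix.smul_mulVec,
          add_comm]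
      have hm : H.mulVec (b + a • p) ∈ Metric.closedBall (0 : Fin n → ℝ) K' := by
        rw [mem_closedBall_zero_iff] at hp ⊢
        rw [← hTv]
        refine (T.le_opNorm _).trans ?_
        refine mul_le_mul_of_nonneg_left ?_ (norm_nonneg _)
        refine (norm_add_le _ _).trans (add_le_add hb ?_)
        rw [norm_smul, Real.norm_eq_abs]
        nlinarith [abs_nonneg a]
      rw [Set.indicator_of_mem hp, e, hg, Set.indicator_of_mem hm]
    · simp [Set.indicator_of_notMem hp]
  refine hle.trans ?_
  have hmeas : Measurable (Matrix.toLin' (a • H)) :=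
    (LinearMap.continuous_of_finiteDimensional _).measurable
  rw [← lintegral_map (f := fun y => g (y + H.mulVec b)) (by fun_prop) hmeas,
    Real.map_matrix_volume_pi_eq_smul_volume_pi hdet, lintegral_smul_measure,
    lintegral_add_right_eq_self, hg,
    lintegral_indicator Metric.isClosed_closedBall.measurableSet, smul_eq_mul]
  gcongr
  rw [abs_inv, Matrix.det_smul, abs_mul, abs_pow, Fintype.card_fin]
  have := abs_pos.mpr hH
  gcongr

/-! ### The small-ball estimate -/

/-- The matrix whose `i`-th column is `p` and whose other columns vanish. -/
def colMat {n m : ℕ} (i : Fin m) (p : Fin n → ℝ) : Fin n → Fin m → ℝ :=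
  fun l i' => if i' = i then p l else 0

lemma continuous_colMat {n m : ℕ} (i : Fin m) : Continuous (colMat (n := n) i) := by
  refine continuous_pi fun l => continuous_pi fun i' => ?_
  unfold colMat
  split_ifs <;> fun_prop

lemma norm_colMat_le {n m : ℕ} (i : Fin m) {p : Fin n → ℝ} (hp : ‖p‖ ≤ 1) :
    ‖colMat i p‖ ≤ 1 := by
  refine (pi_norm_le_iff_of_nonneg zero_le_one).mpr fun l =>
    (pi_norm_le_iff_of_nonneg zero_le_one).mpr fun i' => ?_
  unfold colMat
  split_ifs
  · exact (norm_le_pi_norm p l).trans hp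
  · simp

lemma convSum_apply {n m1 m2 : ℕ} (M : EuclideanSpace ℝ (Fin m1 × Fin m2))
    (D : Fin n → Fin m1 → ℝ) (E : Fin n → Fin m2 → ℝ) (r : Fin n) :
    convSum M D E r = ∑ i, ∑ k, M (i, k) * ∑ l, D (r - l) i * E l k := by
  simp [convSum, Matrix.mulVec, dotProduct]

lemma continuous_convSum {n m1 m2 : ℕ} (M : EuclideanSpace ℝ (Fin m1 × Fin m2)) (r : Fin n) :
    Continuous fun v : (Fin n → Fin m1 → ℝ) × (Fin n → Fin m2 → ℝ) => convSum M v.1 v.2 r := by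
  simp_rw [convSum_apply]
  fun_prop

/-- Changing one column of `E` changes the measurement by a circulant matrix, whose generating
vector is an affine function of each column of `D`. -/
lemma convSum_add {n m1 m2 : ℕ} (M : EuclideanSpace ℝ (Fin m1 × Fin m2))
    (D : Fin n → Fin m1 → ℝ) (E : Fin n → Fin m2 → ℝ) (i : Fin m1) (k : Fin m2)
    (p q : Fin n → ℝ) (r : Fin n) :
    convSum M (D + colMat i p) (E + colMat k q) r = convSum M (D + colMat i p) E r +
      (Matrix.circulant ((fun l => ∑ i', M (i', k) * D l i') + M (i, k) • p)).mulVec q r := by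
  have h1 : ∀ l, ((fun l => ∑ i', M (i', k) * D l i') + M (i, k) • p) l =
      ∑ i', M (i', k) * (D + colMat i p) l i' := by
    intro l
    simp [colMat, mul_add, Finset.sum_add_distrib]
  have h2 : ((fun l => ∑ i', M (i', k) * D l i') + M (i, k) • p) =
      fun l => ∑ i', M (i', k) * (D + colMat i p) l i' := funext h1
  have hE : ∀ l k', (E + colMat k q) l k' = E l k' + colMat k q l k' := fun _ _ => rfl
  rw [h2, convSum_apply, convSum_apply]
  generalize D + colMat i p = D'
  simp only [Matrix.mulVec, dotProduct, Matrix.circulant_apply, hE, mul_add,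
    Finset.sum_add_distrib, add_right_inj]
  have h3 : ∀ i', ∑ k', M (i', k') * ∑ l, D' (r - l) i' * colMat k q l k' =
      M (i', k) * ∑ l, D' (r - l) i' * q l := by
    intro i'
    rw [Finset.sum_eq_single k]
    · simp [colMat]
    · intro k' _ hk'
      simp [colMat, hk']
    · simp
  simp_rw [h3, Finset.mul_sum, Finset.sum_mul]
  rw [Finset.sum_comm]
  refine Finset.sum_congr rfl fun l _ => Finset.sum_congr rfl fun i' _ => ?_
  ring

/-- Small-ball estimate when only one column of `D` and one column of `E` vary. -/
lemma volume_columns_le (n m1 m2 : ℕ) (hn : 0 < n) (i : Fin m1) (k : Fin m2) (K : ℝ)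
    {η : ℝ} (hη : 0 < η) {s : ℝ} (h0 : 0 < s) (h1 : s < 1) :
    ∃ C : ℝ≥0∞, C ≠ ∞ ∧ ∀ (M : EuclideanSpace ℝ (Fin m1 × Fin m2)) (D : Fin n → Fin m1 → ℝ)
      (E : Fin n → Fin m2 → ℝ) (δ : ℝ), (∀ e, |M e| ≤ K) → η ≤ |M (i, k)| → ‖D‖ ≤ K → 0 < δ →
      volume {w : (Fin n → ℝ) × (Fin n → ℝ) | ‖w‖ ≤ 1 ∧
        ∀ r, |convSum M (D + colMat i w.1) (E + colMat k w.2) r| ≤ δ} ≤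
        C * (ENNReal.ofReal δ ^ n) ^ s := by
  have : NeZero n := ⟨hn.ne'⟩
  have hζ := dftRoot_primitive n hn
  set H := hartleyMat n (dftRoot n)
  obtain ⟨C, hC, hCb⟩ := lintegral_singWeight_comp_le H (hartleyMat_det_ne_zero hζ) h1
    (K + m1 * (K * K)) hη
  refine ⟨2 ^ n * ((2 ^ n) ^ s * C), by finiteness, fun M D E δ hM hMik hD hδ => ?_⟩
  have hK : 0 ≤ K := (norm_nonneg D).trans hD
  set b : Fin n → ℝ := fun l => ∑ i', M (i', k) * D l i' with hb
  have hbK : ‖b‖ ≤ m1 * (K * K) := by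
    refine (pi_norm_le_iff_of_nonneg (by positivity)).mpr fun l => ?_
    calc ‖b l‖ ≤ ∑ i' : Fin m1, K * K := by
          refine norm_sum_le_of_le _ fun i' _ => ?_
          rw [norm_mul]
          exact mul_le_mul (hM _) ((norm_le_pi_norm (D l) i').trans
            ((norm_le_pi_norm D l).trans hD)) (norm_nonneg _) hK
      _ = _ := by simp
  have hslice : ∀ p : Fin n → ℝ, volume {q : Fin n → ℝ | ‖q‖ ≤ 1 ∧
      ∀ r, |convSum M (D + colMat i p) (E + colMat k q) r| ≤ δ} ≤
      2 ^ n * ((2 ^ n) ^ s * (ENNReal.ofReal δ ^ n) ^ s) *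
        singWeight s (H.mulVec (b + M (i, k) • p)) := by
    intro p
    simp_rw [convSum_add]
    refine (volume_affine_slice_le _ _ hδ h0 h1).trans ?_
    rw [mul_assoc]
    gcongr 2 ^ n * ?_
    set x := b + M (i, k) • p with hx
    have hdet : ∏ j, ENNReal.ofReal |H.mulVec x j| ≤
        2 ^ n * ENNReal.ofReal |(Matrix.circulant x).det| := by
      rw [← ENNReal.ofReal_prod_of_nonneg fun _ _ => abs_nonneg _]
      refine (ENNReal.ofReal_le_ofReal (prod_hartley_le_det hζ x)).trans_eq ?_
      rw [ENNReal.ofReal_mul (by positivity), ENNReal.ofReal_pow (by norm_num)]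
      simp
    have hw : singWeight s (H.mulVec x) = ((∏ j, ENNReal.ofReal |H.mulVec x j|)⁻¹) ^ s := by
      rw [singWeight, ENNReal.prod_inv_distrib fun _ _ _ _ _ => Or.inr ENNReal.ofReal_ne_top,
        ← ENNReal.prod_rpow_of_nonneg h0.le]
      refine Finset.prod_congr rfl fun j _ => ?_
      rw [ENNReal.rpow_neg, ENNReal.inv_rpow]
    rw [hw, ← ENNReal.mul_rpow_of_nonneg _ _ h0.le, ← ENNReal.mul_rpow_of_nonneg _ _ h0.le]
    refine ENNReal.rpow_le_rpow ?_ h0.le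
    calc ENNReal.ofReal δ ^ n / ENNReal.ofReal |(Matrix.circulant x).det|
        = 2 ^ n * ENNReal.ofReal δ ^ n / (2 ^ n * ENNReal.ofReal |(Matrix.circulant x).det|) :=
          (ENNReal.mul_div_mul_left _ _ (by simp) (by simp)).symm
      _ ≤ 2 ^ n * ENNReal.ofReal δ ^ n * (∏ j, ENNReal.ofReal |H.mulVec x j|)⁻¹ := by
          rw [div_eq_mul_inv]
          gcongr
  have hmeas : MeasurableSet {w : (Fin n → ℝ) × (Fin n → ℝ) | ‖w‖ ≤ 1 ∧
      ∀ r, |convSum M (D + colMat i w.1) (E + colMat k w.2) r| ≤ δ} := by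
    refine IsClosed.measurableSet ?_
    rw [Set.ofPred_and, Set.ofPred_forall]
    refine (isClosed_le continuous_norm continuous_const).inter (isClosed_iInter fun r => ?_)
    refine isClosed_le ?_ continuous_const
    have h1 := continuous_colMat (n := n) i
    have h2 := continuous_colMat (n := n) k
    exact ((continuous_convSum M r).comp (f := fun w : (Fin n → ℝ) × (Fin n → ℝ) =>
      (D + colMat i w.1, E + colMat k w.2)) (by fun_prop)).abs
  rw [Measure.volume_eq_prod, Measure.prod_apply hmeas]
  calc _ ≤ ∫⁻ p in Metric.closedBall (0 : Fin n → ℝ) 1,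
        2 ^ n * ((2 ^ n) ^ s * (ENNReal.ofReal δ ^ n) ^ s) *
          singWeight s (H.mulVec (b + M (i, k) • p)) := by
        rw [← lintegral_indicator Metric.isClosed_closedBall.measurableSet]
        refine lintegral_mono fun p => ?_
        by_cases hp : p ∈ Metric.closedBall (0 : Fin n → ℝ) 1
        · rw [Set.indicator_of_mem hp]
          refine le_trans (measure_mono fun q hq => ?_) (hslice p)
          exact ⟨(norm_snd_le (p, q)).trans hq.1, hq.2⟩
        · rw [Set.indicator_of_notMem hp, nonpos_iff_eq_zero]
          convert! measure_empty (μ := (volume : Measure (Fin n → ℝ)))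
          rw [Set.eq_empty_iff_forall_notMem]
          intro q hq
          exact hp (mem_closedBall_zero_iff.mpr ((norm_fst_le (p, q)).trans hq.1))
    _ = 2 ^ n * ((2 ^ n) ^ s * (ENNReal.ofReal δ ^ n) ^ s) *
        ∫⁻ p in Metric.closedBall (0 : Fin n → ℝ) 1,
          singWeight s (H.mulVec (b + M (i, k) • p)) := by
        rw [lintegral_const_mul' _ _ (by finiteness)]
    _ ≤ 2 ^ n * ((2 ^ n) ^ s * (ENNReal.ofReal δ ^ n) ^ s) * C := by
        gcongr
        refine hCb _ _ hMik ((hM _).trans ?_) (hbK.trans ?_)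
        · have : 0 ≤ (m1 : ℝ) * (K * K) := by positivity
          linarith
        · linarith
    _ = _ := by ring

/-- Averaging a set over translations by a unit ball of another space: a uniform bound on the
sections along the translations bounds the measure of the set. -/
lemma volume_le_of_translates {V W : Type*} [NormedAddCommGroup V] [MeasureSpace V] [BorelSpace V]
    [SecondCountableTopology V] [SFinite (volume : Measure V)]
    [(volume : Measure V).IsAddRightInvariant]
    [NormedAddCommGroup W] [MeasureSpace W] [BorelSpace W] [SecondCountableTopology W]
    [SFinite (volume : Measure W)]
    (ι : W → V) (hι : Continuous ι) (hι1 : ∀ w, ‖w‖ ≤ 1 → ‖ι w‖ ≤ 1)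
    (S : Set V) (hS : MeasurableSet S) (R : ℝ) (hR : ∀ v ∈ S, ‖v‖ ≤ R) (ε : ℝ≥0∞)
    (h : ∀ v, ‖v‖ ≤ R + 1 → volume {w : W | ‖w‖ ≤ 1 ∧ v + ι w ∈ S} ≤ ε) :
    volume S * volume (Metric.closedBall (0 : W) 1) ≤
      ε * volume (Metric.closedBall (0 : V) (R + 1)) := by
  set P : Set (V × W) := {z | ‖z.2‖ ≤ 1 ∧ z.1 + ι z.2 ∈ S} with hP
  have hPm : MeasurableSet P := by
    refine MeasurableSet.inter (isClosed_le (f := fun z : V × W => ‖z.2‖)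
      (by fun_prop) continuous_const).measurableSet ?_
    have : Measurable fun z : V × W => z.1 + ι z.2 := (by fun_prop : Continuous _).measurable
    exact this hS
  have e1 : (volume.prod volume) P = volume S * volume (Metric.closedBall (0 : W) 1) := by
    rw [Measure.prod_apply_symm hPm, ← lintegral_indicator_const
      Metric.isClosed_closedBall.measurableSet]
    refine lintegral_congr fun w => ?_
    by_cases hw : w ∈ Metric.closedBall (0 : W) 1
    · rw [Set.indicator_of_mem hw, ← measure_preimage_add_right volume (ι w) S]
      congr 1
      ext v
      simp [hP, mem_closedBall_zero_iff.mp hw]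
    · rw [Set.indicator_of_notMem hw]
      convert! measure_empty (μ := (volume : Measure V))
      ext v
      simp only [hP, Set.mem_preimage, Set.mem_ofPred_eq, Set.mem_empty_iff_false, iff_false]
      exact fun hv => hw (mem_closedBall_zero_iff.mpr hv.1)
  rw [← e1, Measure.prod_apply hPm, ← lintegral_indicator_const
      Metric.isClosed_closedBall.measurableSet]
  refine lintegral_mono fun v => ?_
  by_cases hv : v ∈ Metric.closedBall (0 : V) (R + 1)
  · rw [Set.indicator_of_mem hv]
    exact h v (mem_closedBall_zero_iff.mp hv)
  · rw [Set.indicator_of_notMem hv, nonpos_iff_eq_zero]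
    convert! measure_empty (μ := (volume : Measure W))
    ext w
    simp only [hP, Set.mem_preimage, Set.mem_ofPred_eq, Set.mem_empty_iff_false, iff_false]
    rintro ⟨hw1, hw2⟩
    apply hv
    rw [mem_closedBall_zero_iff]
    have h2 : v = (v + ι w) - ι w := by abel
    rw [h2]
    exact (norm_sub_le _ _).trans (add_le_add (hR _ hw2) (hι1 w hw1))

/-- Small-ball estimate for the measurement of a fixed matrix, uniform over the matrices with
bounded entries and `(i, k)` entry bounded away from zero. -/
lemma volume_smallBall_le (n m1 m2 : ℕ) (hn : 0 < n) (i : Fin m1) (k : Fin m2) (K R : ℝ)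
    {η : ℝ} (hη : 0 < η) {s : ℝ} (h0 : 0 < s) (h1 : s < 1) :
    ∃ C : ℝ≥0∞, C ≠ ∞ ∧ ∀ (M : EuclideanSpace ℝ (Fin m1 × Fin m2)) (δ : ℝ),
      (∀ e, |M e| ≤ K) → η ≤ |M (i, k)| → 0 < δ →
      volume {v : (Fin n → Fin m1 → ℝ) × (Fin n → Fin m2 → ℝ) | ‖v‖ ≤ R ∧
        ∀ r, |convSum M v.1 v.2 r| ≤ δ} ≤ C * (ENNReal.ofReal δ ^ n) ^ s := by
  obtain ⟨C, hC, hCb⟩ := volume_columns_le n m1 m2 hn i k (max K (R + 1)) hη h0 h1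
  set B := volume (Metric.closedBall (0 : (Fin n → ℝ) × (Fin n → ℝ)) 1)
  have hB0 : B ≠ 0 := (Metric.measure_closedBall_pos volume _ zero_lt_one).ne'
  have hB1 : B ≠ ∞ := (isCompact_closedBall _ _).measure_lt_top.ne
  set B' := volume (Metric.closedBall
    (0 : (Fin n → Fin m1 → ℝ) × (Fin n → Fin m2 → ℝ)) (R + 1))
  have hB' : B' ≠ ∞ := (isCompact_closedBall _ _).measure_lt_top.ne
  refine ⟨C * B' / B, ENNReal.div_ne_top (by finiteness) hB0, fun M δ hM hMik hδ => ?_⟩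
  set S := {v : (Fin n → Fin m1 → ℝ) × (Fin n → Fin m2 → ℝ) | ‖v‖ ≤ R ∧
        ∀ r, |convSum M v.1 v.2 r| ≤ δ} with hS
  have hSm : MeasurableSet S := by
    refine IsClosed.measurableSet ?_
    rw [hS, Set.ofPred_and, Set.ofPred_forall]
    exact (isClosed_le continuous_norm continuous_const).inter (isClosed_iInter fun r =>
      isClosed_le (continuous_convSum M r).abs continuous_const)
  have h1 := continuous_colMat (n := n) i
  have h2 := continuous_colMat (n := n) k
  have : (volume : Measure ((Fin n → Fin m1 → ℝ) × (Fin n → Fin m2 → ℝ))).IsAddHaarMeasure :=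
    have hpi : ∀ m, (volume : Measure (Fin n → Fin m → ℝ)).IsAddHaarMeasure :=
      fun m => Measure.pi.isAddHaarMeasure _
    have := hpi m1
    have := hpi m2
    Measure.prod.instIsAddHaarMeasure _ _
  have key := volume_le_of_translates
    (fun w : (Fin n → ℝ) × (Fin n → ℝ) => (colMat i w.1, colMat k w.2)) (by fun_prop)
    (fun w hw => norm_prod_le_iff.mpr ⟨norm_colMat_le i ((norm_fst_le w).trans hw),
      norm_colMat_le k ((norm_snd_le w).trans hw)⟩)
    S hSm R (fun v hv => hv.1) (C * (ENNReal.ofReal δ ^ n) ^ s) (fun v hv => by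
      refine le_trans (measure_mono fun w hw => ?_)
        (hCb M v.1 v.2 δ (fun e => (hM e).trans (le_max_left _ _)) hMik
          (((norm_fst_le v).trans hv).trans (le_max_right _ _)) hδ)
      exact ⟨hw.1, hw.2.2⟩)
  rw [← ENNReal.le_div_iff_mul_le (Or.inl hB0) (Or.inl hB1)] at key
  refine key.trans_eq ?_
  simp only [div_eq_mul_inv]
  ring

/-! ### Covering numbers -/

lemma exists_cover_card_eq {X : Type*} [PseudoMetricSpace X] {Ω : Set X} (hΩ : TotallyBounded Ω)
    {ρ : ℝ} (hρ : 0 < ρ) :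
    ∃ C : Finset X, C.card = coveringNumber Ω ρ ∧ Ω ⊆ ⋃ c ∈ C, Metric.closedBall c ρ := by
  obtain ⟨t, ht, hcov⟩ := Metric.totallyBounded_iff.mp hΩ ρ hρ
  refine Nat.sInf_mem (s := {k : ℕ | ∃ C : Finset X, C.card = k ∧
    Ω ⊆ ⋃ c ∈ C, Metric.closedBall c ρ}) ⟨_, ht.toFinset, rfl, hcov.trans ?_⟩
  simp only [Set.Finite.mem_toFinset]
  exact Set.iUnion₂_mono fun c _ => Metric.ball_subset_closedBall

/-- A ball of a finite-dimensional space is covered by `K` balls of half the radius, hence by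
`K ^ j` balls whose radius is smaller by the factor `2 ^ j`. -/
lemma exists_dyadic_cover (V : Type*) [NormedAddCommGroup V] [NormedSpace ℝ V]
    [FiniteDimensional ℝ V] : ∃ K : ℕ, 1 ≤ K ∧ ∀ (R : ℝ), 0 < R → ∀ j : ℕ,
      ∃ C : Finset V, C.card ≤ K ^ j ∧
        Metric.closedBall (0 : V) R ⊆ ⋃ c ∈ C, Metric.closedBall c (R / 2 ^ j) := by
  classical
  have : ProperSpace V := FiniteDimensional.proper ℝ V
  obtain ⟨T, -, hT⟩ := exists_cover_card_eq
    (isCompact_closedBall (0 : V) 1).totallyBounded (ρ := 1 / 2) (by norm_num)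
  refine ⟨T.card, ?_, fun R hR j => ?_⟩
  · have h0 := hT (Metric.mem_closedBall_self zero_le_one)
    simp only [Set.mem_iUnion] at h0
    obtain ⟨c, hc, -⟩ := h0
    exact Finset.card_pos.mpr ⟨c, hc⟩
  · induction j with
    | zero => exact ⟨{0}, by simp, by simp⟩
    | succ j ih =>
      obtain ⟨C, hC, hcov⟩ := ih
      have hr : 0 < R / 2 ^ j := by positivity
      refine ⟨Finset.image₂ (fun c t => c + (R / 2 ^ j) • t) C T, ?_, fun v hv => ?_⟩
      · rw [pow_succ]
        exact (Finset.card_image₂_le _ _ _).trans (Nat.mul_le_mul_right _ hC)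
      · have h1 := hcov hv
        simp only [Set.mem_iUnion] at h1
        obtain ⟨c, hc, hvc⟩ := h1
        have hu : (R / 2 ^ j)⁻¹ • (v - c) ∈ Metric.closedBall (0 : V) 1 := by
          rw [mem_closedBall_zero_iff, norm_smul, norm_inv, Real.norm_of_nonneg hr.le,
            inv_mul_le_iff₀ hr, mul_one]
          exact mem_closedBall_iff_norm.mp hvc
        have h2 := hT hu
        simp only [Set.mem_iUnion] at h2
        obtain ⟨t, ht, hut⟩ := h2
        simp only [Set.mem_iUnion]
        refine ⟨_, Finset.mem_image₂_of_mem hc ht, ?_⟩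
        rw [mem_closedBall_iff_norm] at hut ⊢
        have e : v - (c + (R / 2 ^ j) • t) =
            (R / 2 ^ j) • ((R / 2 ^ j)⁻¹ • (v - c) - t) := by
          rw [smul_sub, smul_inv_smul₀ hr.ne']
          abel
        rw [e, norm_smul, Real.norm_of_nonneg hr.le]
        calc R / 2 ^ j * _ ≤ R / 2 ^ j * (1 / 2) := by gcongr
          _ = _ := by rw [pow_succ]; field_simp

/-- The quotients defining the lower Minkowski dimension do not tend to infinity, so that their
real-valued `liminf` is a genuine one. -/
lemma frequently_quotient_le {V : Type*} [NormedAddCommGroup V] [NormedSpace ℝ V]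
    [FiniteDimensional ℝ V] {Ω : Set V} (hΩ : Bornology.IsBounded Ω) :
    ∃ b : ℝ, ∃ᶠ ρ in nhdsWithin (0 : ℝ) (Set.Ioi 0),
      Real.log (coveringNumber Ω ρ) / Real.log (1 / ρ) ≤ b := by
  obtain ⟨K, hK1, hK⟩ := exists_dyadic_cover V
  obtain ⟨R, hR, hΩR⟩ := hΩ.subset_closedBall_lt 0 (0 : V)
  refine ⟨2 * Real.log K / Real.log 2, ?_⟩
  have hl2 : 0 < Real.log 2 := Real.log_pos one_lt_two
  have hlK : 0 ≤ Real.log K := Real.log_natCast_nonneg K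
  have htend : Tendsto (fun j : ℕ => R / 2 ^ j) atTop (nhdsWithin 0 (Set.Ioi 0)) := by
    refine tendsto_nhdsWithin_iff.mpr ⟨?_, .of_forall fun j => by
      simpa using by positivity⟩
    exact tendsto_const_nhds.div_atTop (tendsto_pow_atTop_atTop_of_one_lt one_lt_two)
  refine htend.frequently (Eventually.frequently ?_)
  filter_upwards [(tendsto_natCast_atTop_atTop (R := ℝ)).eventually_ge_atTop
    (2 * Real.log R / Real.log 2), eventually_ge_atTop 1] with j hj hj1
  obtain ⟨C, hC, hcov⟩ := hK R hR j
  have hN : coveringNumber Ω (R / 2 ^ j) ≤ K ^ j := by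
    have hmem : C.card ∈ {k : ℕ | ∃ C : Finset V, C.card = k ∧
        Ω ⊆ ⋃ c ∈ C, Metric.closedBall c (R / 2 ^ j)} := ⟨C, rfl, hΩR.trans hcov⟩
    exact (Nat.sInf_le hmem).trans hC
  have hlogN : Real.log (coveringNumber Ω (R / 2 ^ j)) ≤ j * Real.log K := by
    rcases Nat.eq_zero_or_pos (coveringNumber Ω (R / 2 ^ j)) with h0 | h0
    · rw [h0]
      simpa using by positivity
    · rw [← Real.log_pow]
      exact Real.log_le_log (by exact_mod_cast h0) (by exact_mod_cast hN)
  have hj0 : (1 : ℝ) ≤ j := by exact_mod_cast hj1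
  have hden : Real.log (1 / (R / 2 ^ j)) = j * Real.log 2 - Real.log R := by
    rw [one_div_div, Real.log_div (by positivity) hR.ne', Real.log_pow]
  have hden2 : j * Real.log 2 / 2 ≤ Real.log (1 / (R / 2 ^ j)) := by
    rw [hden]
    rw [div_le_iff₀ hl2] at hj
    linarith
  have hpos : 0 < j * Real.log 2 / 2 := by positivity
  rw [div_le_div_iff₀ (hpos.trans_le hden2) hl2]
  calc _ ≤ j * Real.log K * Real.log 2 := by gcongr
    _ = 2 * Real.log K * (j * Real.log 2 / 2) := by ring
    _ ≤ _ := by gcongr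

lemma frequently_coveringNumber_le {V : Type*} [NormedAddCommGroup V] [NormedSpace ℝ V]
    [FiniteDimensional ℝ V] {Ω : Set V} (hΩ : Bornology.IsBounded Ω) {d : ℝ}
    (hd : lowerMinkowskiDim Ω < d) :
    ∃ᶠ ρ in nhdsWithin (0 : ℝ) (Set.Ioi 0), 0 < ρ ∧ (coveringNumber Ω ρ : ℝ) ≤ ρ ^ (-d) := by
  obtain ⟨b, hb⟩ := frequently_quotient_le hΩ
  have hf := frequently_lt_of_liminf_lt (IsCoboundedUnder.of_frequently_le hb) hd
  have hev : ∀ᶠ ρ in nhdsWithin (0 : ℝ) (Set.Ioi 0), ρ ∈ Set.Ioo (0 : ℝ) 1 :=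
    Ioo_mem_nhdsGT one_pos
  refine (hf.and_eventually hev).mono fun ρ ⟨h1, h2⟩ => ⟨h2.1, ?_⟩
  rcases Nat.eq_zero_or_pos (coveringNumber Ω ρ) with h0 | h0
  · rw [h0]
    simpa using Real.rpow_nonneg h2.1.le _
  · have hl : 0 < Real.log (1 / ρ) := Real.log_pos (by rw [lt_div_iff₀ h2.1]; linarith [h2.2])
    rw [div_lt_iff₀ hl] at h1
    have hp : 0 < ρ ^ (-d) := Real.rpow_pos_of_pos h2.1 _
    rw [← Real.log_le_log_iff (by exact_mod_cast h0) hp, Real.log_rpow h2.1]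
    rw [one_div, Real.log_inv] at h1
    linarith

/-! ### The union bound -/

lemma abs_convSum_sub_le {n m1 m2 : ℕ} {M M' : EuclideanSpace ℝ (Fin m1 × Fin m2)} {R τ : ℝ}
    {v : (Fin n → Fin m1 → ℝ) × (Fin n → Fin m2 → ℝ)} (hv : ‖v‖ ≤ R) (hM : ‖M - M'‖ ≤ τ)
    (r : Fin n) :
    |convSum M v.1 v.2 r - convSum M' v.1 v.2 r| ≤ m1 * (m2 * (n * (R * R))) * τ := by
  have hR : 0 ≤ R := (norm_nonneg v).trans hv
  have hτ : 0 ≤ τ := (norm_nonneg _).trans hM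
  have e : convSum M v.1 v.2 r - convSum M' v.1 v.2 r = convSum (M - M') v.1 v.2 r := by
    simp [convSum_apply, sub_mul, Finset.sum_sub_distrib]
  rw [e, convSum_apply, ← Real.norm_eq_abs]
  have h1 : ∀ l i, ‖v.1 l i‖ ≤ R := fun l i =>
    ((norm_le_pi_norm (v.1 l) i).trans (norm_le_pi_norm v.1 l)).trans ((norm_fst_le v).trans hv)
  have h2 : ∀ l k, ‖v.2 l k‖ ≤ R := fun l k =>
    ((norm_le_pi_norm (v.2 l) k).trans (norm_le_pi_norm v.2 l)).trans ((norm_snd_le v).trans hv)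
  calc _ ≤ ∑ _i : Fin m1, ∑ _k : Fin m2, τ * ∑ _l : Fin n, R * R := by
        refine norm_sum_le_of_le _ fun i _ => norm_sum_le_of_le _ fun k _ => ?_
        rw [norm_mul]
        refine mul_le_mul ((PiLp.norm_apply_le _ _).trans hM)
          (norm_sum_le_of_le _ fun l _ => ?_) (norm_nonneg _) hτ
        rw [norm_mul]
        exact mul_le_mul (h1 _ _) (h2 _ _) (norm_nonneg _) hR
    _ = _ := by
        simp
        ring

/-- The covering argument: a union bound over a cover of `Ω` by `ρ ^ (-d)` balls of radius `ρ`
against a small-ball probability of order `ρ ^ (n s)` with `n s > d`. -/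
lemma volume_bad_eq_zero {n m1 m2 : ℕ} (hn : 0 < n)
    {Ω : Set (EuclideanSpace ℝ (Fin m1 × Fin m2))} (hbd : Bornology.IsBounded Ω)
    (hdim : lowerMinkowskiDim Ω < n) (i : Fin m1) (k : Fin m2) {η : ℝ} (hη : 0 < η) {R : ℝ}
    (hR : 0 ≤ R) :
    volume {v : (Fin n → Fin m1 → ℝ) × (Fin n → Fin m2 → ℝ) | ‖v‖ ≤ R ∧
      ∃ M ∈ Ω, η ≤ |M (i, k)| ∧ convSum M v.1 v.2 = 0} = 0 := by
  have hn' : (0 : ℝ) < n := by exact_mod_cast hn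
  obtain ⟨d, hd0, hd, hdn⟩ : ∃ d : ℝ, 0 ≤ d ∧ lowerMinkowskiDim Ω < d ∧ d < n := by
    obtain ⟨d, h1, h2⟩ := exists_between (max_lt hdim hn')
    exact ⟨d, ((le_max_right _ _).trans_lt h1).le, (le_max_left _ _).trans_lt h1, h2⟩
  -- any exponent strictly between `d / n` and `1` works
  set s : ℝ := (d / n + 1) / 2 with hs
  have hdn1 : d / n < 1 := (div_lt_one hn').mpr hdn
  have hs0 : 0 < s := by positivity
  have hs1 : s < 1 := by linarith
  have hns : d < n * s := by
    have : n * s = (d + n) / 2 := by rw [hs]; field_simp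
    linarith
  obtain ⟨K, hK⟩ := hbd.exists_norm_le
  obtain ⟨C, hC, hCb⟩ := volume_smallBall_le n m1 m2 hn i k K R hη hs0 hs1
  set A : ℝ := (m1 * (m2 * (n * (R * R))) + 1) * 2 with hA
  have hA0 : 0 < A := by positivity
  have htb : TotallyBounded Ω := hbd.isCompact_closure.totallyBounded.subset subset_closure
  set B := {v : (Fin n → Fin m1 → ℝ) × (Fin n → Fin m2 → ℝ) | ‖v‖ ≤ R ∧
      ∃ M ∈ Ω, η ≤ |M (i, k)| ∧ convSum M v.1 v.2 = 0} with hB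
  have hbound : ∀ ρ : ℝ, 0 < ρ → (coveringNumber Ω ρ : ℝ) ≤ ρ ^ (-d) →
      volume B ≤ C * ENNReal.ofReal (A ^ (n * s) * ρ ^ (n * s - d)) := by
    intro ρ hρ hN
    obtain ⟨T, hT, hcov⟩ := exists_cover_card_eq htb hρ
    set S : EuclideanSpace ℝ (Fin m1 × Fin m2) → Set _ := fun c =>
      {v : (Fin n → Fin m1 → ℝ) × (Fin n → Fin m2 → ℝ) | ‖v‖ ≤ R ∧
        ∃ M ∈ Ω, η ≤ |M (i, k)| ∧ convSum M v.1 v.2 = 0 ∧ M ∈ Metric.closedBall c ρ}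
    have hBS : B ⊆ ⋃ c ∈ T, S c := by
      rintro v ⟨hv, M, hM, hMik, h0⟩
      have := hcov hM
      simp only [Set.mem_iUnion] at this ⊢
      obtain ⟨c, hc, hMc⟩ := this
      exact ⟨c, hc, hv, M, hM, hMik, h0, hMc⟩
    have hS : ∀ c, volume (S c) ≤ C * (ENNReal.ofReal (A * ρ) ^ n) ^ s := by
      intro c
      -- the centre is replaced by a point of `Ω`, which costs a factor `2` in the radius
      by_cases hex : ∃ M' ∈ Ω, η ≤ |M' (i, k)| ∧ M' ∈ Metric.closedBall c ρ
      · obtain ⟨M', hM', hMik', hMc'⟩ := hex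
        refine le_trans (measure_mono ?_) (hCb M' (A * ρ)
          (fun e => (PiLp.norm_apply_le M' e).trans (hK M' hM')) hMik' (by positivity))
        rintro v ⟨hv, M, hM, hMik, h0, hMc⟩
        refine ⟨hv, fun r => ?_⟩
        have hdist : ‖M' - M‖ ≤ 2 * ρ := by
          rw [← dist_eq_norm]
          have := dist_triangle_right M' M c
          rw [Metric.mem_closedBall] at hMc hMc'
          linarith
        have := abs_convSum_sub_le hv hdist r
        rw [h0, Pi.zero_apply, sub_zero] at this
        refine this.trans ?_
        rw [hA]
        nlinarith
      · have : S c = ∅ := by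
          rw [Set.eq_empty_iff_forall_notMem]
          rintro v ⟨hv, M, hM, hMik, h0, hMc⟩
          exact hex ⟨M, hM, hMik, hMc⟩
        simp [this]
    calc volume B ≤ ∑ c ∈ T, volume (S c) :=
          (measure_mono hBS).trans (measure_biUnion_finset_le _ _)
      _ ≤ ∑ c ∈ T, C * (ENNReal.ofReal (A * ρ) ^ n) ^ s := Finset.sum_le_sum fun c _ => hS c
      _ = C * (ENNReal.ofReal (coveringNumber Ω ρ) * (ENNReal.ofReal (A * ρ) ^ n) ^ s) := by
          rw [Finset.sum_const, hT, nsmul_eq_mul, ENNReal.ofReal_natCast]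
          ring
      _ ≤ C * (ENNReal.ofReal (ρ ^ (-d)) * (ENNReal.ofReal (A * ρ) ^ n) ^ s) := by gcongr
      _ = _ := by
          rw [← ENNReal.ofReal_pow (by positivity), ENNReal.ofReal_rpow_of_pos (by positivity),
            ← ENNReal.ofReal_mul (by positivity), ← Real.rpow_natCast, ← Real.rpow_mul
            (by positivity), Real.mul_rpow hA0.le hρ.le, sub_eq_add_neg, Real.rpow_add hρ]
          congr 2
          ring
  have hlim : Tendsto (fun ρ : ℝ => C * ENNReal.ofReal (A ^ (n * s) * ρ ^ (n * s - d)))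
      (nhdsWithin 0 (Set.Ioi 0)) (nhds 0) := by
    have h1 : Tendsto (fun ρ : ℝ => A ^ (n * s) * ρ ^ (n * s - d)) (nhds 0) (nhds 0) := by
      have h := ((Real.continuousAt_rpow_const 0 (n * s - d)
        (Or.inr (by linarith))).tendsto).const_mul (A ^ (n * s))
      rwa [Real.zero_rpow (by linarith), mul_zero] at h
    have h3 : Tendsto (fun ρ : ℝ => A ^ (n * s) * ρ ^ (n * s - d))
        (nhdsWithin 0 (Set.Ioi 0)) (nhds 0) := h1.mono_left nhdsWithin_le_nhds
    have h2 := ENNReal.Tendsto.const_mul (a := C) (ENNReal.tendsto_ofReal h3) (Or.inr hC)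
    simpa using h2
  have := ge_of_tendsto_of_frequently hlim
    ((frequently_coveringNumber_le hbd hd).mono fun ρ h => hbound ρ h.1 h.2)
  exact nonpos_iff_eq_zero.mp this

/-- For a nonempty bounded `Ω ⊆ ℝ^{m1×m2}` with `n >` lower Minkowski dimension of `Ω`,
for Lebesgue-almost all real `(D, E)` there is no nonzero `M ∈ Ω` with
`(FD)^{(j,:)} M ((FE)^{(j,:)})ᵀ = 0` for all `j`, where `F` is the unitary DFT matrix. -/
theorem null_space_property_real_dft (n m1 m2 : ℕ) (hn : 0 < n)
    (Ω : Set (EuclideanSpace ℝ (Fin m1 × Fin m2))) (hne : Ω.Nonempty)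
    (hbd : Bornology.IsBounded Ω)
    (hdim : lowerMinkowskiDim Ω < n) :
    ∀ᵐ DE : (Fin n → Fin m1 → ℝ) × (Fin n → Fin m2 → ℝ),
      ¬ ∃ M ∈ Ω, M ≠ 0 ∧ ∀ j : Fin n,
        ∑ i : Fin m1, ∑ k : Fin m2,
          (∑ l : Fin n, dftMatrix n j l * (DE.1 l i : ℂ)) * (M (i, k) : ℂ) *
            (∑ l : Fin n, dftMatrix n j l * (DE.2 l k : ℂ)) = 0 := by
  rw [ae_iff]
  refine measure_mono_null (t := ⋃ (i : Fin m1) (k : Fin m2) (L : ℕ) (R : ℕ),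
    {v : (Fin n → Fin m1 → ℝ) × (Fin n → Fin m2 → ℝ) | ‖v‖ ≤ R ∧
      ∃ M ∈ Ω, (1 / ((L : ℝ) + 1)) ≤ |M (i, k)| ∧ convSum M v.1 v.2 = 0}) ?_ ?_
  · intro v hv
    obtain ⟨M, hM, hM0, h0⟩ := not_not.mp hv
    obtain ⟨⟨i, k⟩, hik⟩ : ∃ e, M e ≠ 0 := by
      by_contra! h
      exact hM0 (by ext e; simpa using h e)
    obtain ⟨L, hL⟩ := exists_nat_one_div_lt (abs_pos.mpr hik)
    obtain ⟨R, hR⟩ := exists_nat_ge ‖v‖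
    simp only [Set.mem_iUnion]
    exact ⟨i, k, L, R, hR, M, hM, hL.le, convSum_eq_zero hn M v.1 v.2 h0⟩
  · simp only [measure_iUnion_null_iff]
    intro i k L R
    exact volume_bad_eq_zero hn hbd hdim i k (by positivity) (Nat.cast_nonneg R)
end

section
/- Let m1, m2 be positive integers, R > 0, 0 < ℓ ≤ L, and let M ∈ ℝ^{m1×m2} satisfy ℓ ≤ ‖M‖₂ ≤ L. Let a ∈ ℝ^{m1} and b ∈ ℝ^{m2} be independent random vectors, uniformly distributed on the closed balls of radius R in ℝ^{m1} and ℝ^{m2}, respectively. Then for every ρ with 0 < ρ ≤ ℓ R², the probability that |aᵀ M b| ≤ ρ is at most ρ · (4 V_{m1−1}(R) V_{m2−1}(R)) / (ℓ · V_{m1}(R) V_{m2}(R)) · (1 + ln(L R² / ρ)), where V_m(R) denotes the Lebesgue volume of the closed ball of radius R in ℝ^m (with V_0(R) = 1). -/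
open MeasureTheory Filter

/-- The spectral norm (largest singular value) of a real matrix: the operator norm of the
induced map between Euclidean spaces. -/
noncomputable def specNormR {m1 m2 : ℕ} (M : Matrix (Fin m1) (Fin m2) ℝ) : ℝ :=
  ‖LinearMap.toContinuousLinearMap (Matrix.toEuclideanLin M)‖

/-- The uniform probability measure on the closed ball of radius `R` in `ℝ^m`:
Lebesgue measure restricted to the ball, normalized to total mass one. -/
noncomputable def uniformBallR (m : ℕ) (R : ℝ) : Measure (EuclideanSpace ℝ (Fin m)) :=
  (volume (Metric.closedBall (0 : EuclideanSpace ℝ (Fin m)) R))⁻¹ •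
    volume.restrict (Metric.closedBall (0 : EuclideanSpace ℝ (Fin m)) R)

/-- `V_m(R)`: the Lebesgue volume of the closed ball of radius `R` in `ℝ^m`
(`V_0(R) = 1`). -/
noncomputable def ballVol (m : ℕ) (R : ℝ) : ℝ :=
  (volume (Metric.closedBall (0 : EuclideanSpace ℝ (Fin m)) R)).toReal

/-!
Let `σ = ‖M‖₂` and let `v`, `u` be unit vectors with `M v = σ u`. For fixed `a`, put `w = Mᵀ a`;
then `‖w‖ ≥ |⟪w, v⟫| = σ |⟪u, a⟫|`. The event `|⟪w, b⟫| ≤ ρ` is a slab of half-width `ρ / ‖w‖`,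
and each one-dimensional marginal of the uniform measure on the ball of radius `R` in `ℝ^m` has
density at most `V_{m-1}(R) / V_m(R)` (`lintegral_uniformBallR_inner_le`). Hence, with
`k = 2 ρ V_{m2-1}(R) / (σ V_{m2}(R))` and `t = ⟪u, a⟫`, the conditional probability of the event
is at most `min(1, k / |t|)` (`uniformBallR_slab_le`).

The same density bound applied to `t` reduces the claim to a one-dimensional integral over
`[-R, R]`. Using the bound `1` for `|t| ≤ t₀ = ρ / (σ R)` and `k / |t|` beyond, the integral is
`2 (t₀ + k ln (R / t₀))` (`lintegral_truncated_inv_le`), where `R / t₀ = σ R² / ρ ≤ L R² / ρ`, and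
`t₀ ≤ k` because `V_{m2}(R) ≤ 2 R V_{m2-1}(R)` (`one_le_ballVol_ratio`). Finally `1 / σ ≤ 1 / ℓ`.
-/

/-- In coordinates `(t, y)` with `t = ⟪u, a⟫`, the ball lies in the cylinder
`[-R, R] × B(0, R)`, so Tonelli's theorem bounds the integral of a function of `t` alone. -/
lemma lintegral_closedBall_inner_le (n : ℕ) (R : ℝ)
    (u : EuclideanSpace ℝ (Fin (n + 1))) (hu : ‖u‖ = 1) (g : ℝ → ENNReal) (hg : Measurable g) :
    ∫⁻ a in Metric.closedBall (0 : EuclideanSpace ℝ (Fin (n + 1))) R, g (inner ℝ u a)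
      ≤ volume (Metric.closedBall (0 : EuclideanSpace ℝ (Fin n)) R) *
        ∫⁻ t in Set.Icc (-R) R, g t := by
  -- Completing `u` to an orthonormal basis gives a volume-preserving parametrization `Φ` of the
  -- space by `ℝ × ℝⁿ` whose first coordinate is the inner product with `u`.
  have horth : Orthonormal ℝ (Set.domRestrict {(0 : Fin (n + 1))} fun _ => u) :=
    ⟨fun _ => hu, fun i j hij => (hij (Subsingleton.elim i j)).elim⟩
  obtain ⟨e, he⟩ := horth.exists_orthonormalBasis_extension_of_card_eq (by simp)
  have he0 : e 0 = u := he 0 rfl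
  have hmp1 : MeasurePreserving (fun p : ℝ × (Fin n → ℝ) =>
      e.repr.symm (WithLp.toLp 2 ((MeasurableEquiv.piFinSuccAbove (fun _ => ℝ) 0).symm p)))
      := e.measurePreserving_repr_symm.comp
        ((EuclideanSpace.volume_preserving_symm_measurableEquiv_toLp (Fin (n + 1))).symm.comp
          (volume_preserving_piFinSuccAbove (fun _ => ℝ) 0).symm)
  have hmp : MeasurePreserving (fun p : ℝ × EuclideanSpace ℝ (Fin n) =>
      e.repr.symm (WithLp.toLp 2 ((MeasurableEquiv.piFinSuccAbove (fun _ => ℝ) 0).symm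
        (p.1, WithLp.ofLp p.2)))) := 
    hmp1.comp ((MeasurePreserving.id volume).prod (PiLp.volume_preserving_ofLp (Fin n)))
  set Φ := (fun p : ℝ × EuclideanSpace ℝ (Fin n) =>
      e.repr.symm (WithLp.toLp 2 ((MeasurableEquiv.piFinSuccAbove (fun _ => ℝ) 0).symm
        (p.1, WithLp.ofLp p.2)))) with hΦ
  have hin : ∀ p, inner ℝ u (Φ p) = p.1 := by
    intro p
    rw [← he0, ← e.repr_apply_apply]
    simp [hΦ, MeasurableEquiv.piFinSuccAbove, Fin.insertNthEquiv]
  have hnorm : ∀ p, ‖Φ p‖ ^ 2 = p.1 ^ 2 + ‖p.2‖ ^ 2 := by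
    intro p
    simp [hΦ, MeasurableEquiv.piFinSuccAbove, Fin.insertNthEquiv, EuclideanSpace.norm_sq_eq, Fin.sum_univ_succ]
  have hmeas : Measurable fun a => 
      (Metric.closedBall (0 : EuclideanSpace ℝ (Fin (n + 1))) R).indicator
        (fun a => g (inner ℝ u a)) a :=
    (hg.comp (by fun_prop)).indicator Metric.isClosed_closedBall.measurableSet
  rw [← lintegral_indicator Metric.isClosed_closedBall.measurableSet,
    ← hmp.lintegral_comp hmeas]
  calc _ ≤ ∫⁻ p : ℝ × EuclideanSpace ℝ (Fin n), (Set.Icc (-R) R).indicator g p.1 *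
        (Metric.closedBall (0 : EuclideanSpace ℝ (Fin n)) R).indicator 1 p.2 := by
        refine lintegral_mono fun p => ?_
        by_cases hp : Φ p ∈ Metric.closedBall (0 : EuclideanSpace ℝ (Fin (n + 1))) R
        swap
        · rw [Set.indicator_of_notMem hp]
          exact zero_le
        rw [Set.indicator_of_mem hp]
        rw [mem_closedBall_zero_iff] at hp
        have hR : 0 ≤ R := (norm_nonneg _).trans hp
        have h1 := hnorm p
        have h2 : ‖Φ p‖ ^ 2 ≤ R ^ 2 := by gcongr
        have h3 : p.1 ∈ Set.Icc (-R) R :=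
          Set.mem_Icc.2 (abs_le.1 (abs_le_of_sq_le_sq (by nlinarith [sq_nonneg ‖p.2‖]) hR))
        have h4 : p.2 ∈ Metric.closedBall (0 : EuclideanSpace ℝ (Fin n)) R := by
          rw [mem_closedBall_zero_iff]
          exact (sq_le_sq₀ (norm_nonneg _) hR).1 (by nlinarith [sq_nonneg p.1])
        simp [hin, h3, h4, -Set.mem_Icc]
    _ = _ := by
        rw [Measure.volume_eq_prod, lintegral_prod_mul (hg.indicator measurableSet_Icc).aemeasurable
          (measurable_one.indicator Metric.isClosed_closedBall.measurableSet).aemeasurable,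
          lintegral_indicator_one Metric.isClosed_closedBall.measurableSet,
          lintegral_indicator measurableSet_Icc, mul_comm]

lemma ballVol_pos (m : ℕ) {R : ℝ} (hR : 0 < R) : 0 < ballVol m R :=
  ENNReal.toReal_pos (Metric.measure_closedBall_pos _ _ hR).ne' measure_closedBall_lt_top.ne

lemma ofReal_ballVol (m : ℕ) (R : ℝ) : ENNReal.ofReal (ballVol m R) =
    volume (Metric.closedBall (0 : EuclideanSpace ℝ (Fin m)) R) :=
  ENNReal.ofReal_toReal measure_closedBall_lt_top.ne

lemma isProbabilityMeasure_uniformBallR (m : ℕ) {R : ℝ} (hR : 0 < R) :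
    IsProbabilityMeasure (uniformBallR m R) := by
  refine ⟨?_⟩
  rw [uniformBallR, Measure.smul_apply, Measure.restrict_apply_univ, smul_eq_mul]
  exact ENNReal.inv_mul_cancel (Metric.measure_closedBall_pos _ _ hR).ne'
    measure_closedBall_lt_top.ne

/-- The density of a one-dimensional marginal of the uniform measure on the ball is at most
`V_n(R) / V_{n+1}(R)` (its value at the centre), and it is supported on `[-R, R]`. -/
lemma lintegral_uniformBallR_inner_le (n : ℕ) {R : ℝ} (hR : 0 < R)
    (u : EuclideanSpace ℝ (Fin (n + 1))) (hu : ‖u‖ = 1) (g : ℝ → ENNReal) (hg : Measurable g) :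
    ∫⁻ a, g (inner ℝ u a) ∂(uniformBallR (n + 1) R)
      ≤ ENNReal.ofReal (ballVol n R / ballVol (n + 1) R) * ∫⁻ t in Set.Icc (-R) R, g t := by
  rw [uniformBallR, lintegral_smul_measure, smul_eq_mul,
    ENNReal.ofReal_div_of_pos (ballVol_pos _ hR), ofReal_ballVol, ofReal_ballVol,
    ENNReal.div_eq_inv_mul, mul_assoc]
  gcongr
  exact lintegral_closedBall_inner_le n R u hu g hg

/-- The ball lies in a cylinder of height `2R`: `V_{n+1}(R) ≤ 2R V_n(R)`. -/
lemma one_le_ballVol_ratio (n : ℕ) {R : ℝ} (hR : 0 < R) :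
    1 ≤ 2 * R * (ballVol n R / ballVol (n + 1) R) := by
  have := isProbabilityMeasure_uniformBallR (n + 1) hR
  have h := lintegral_uniformBallR_inner_le n hR (EuclideanSpace.single 0 1) (by simp)
    (fun _ => 1) measurable_const
  rw [lintegral_one, measure_univ, setLIntegral_one, Real.volume_Icc,
    ← ENNReal.ofReal_mul (div_pos (ballVol_pos _ hR) (ballVol_pos _ hR)).le,
    ENNReal.one_le_ofReal] at h
  linarith

/-- A slab has probability at most its width times the maximal marginal density. -/
lemma uniformBallR_slab_le (n : ℕ) {R : ℝ} (hR : 0 < R) {ρ : ℝ}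
    (w : EuclideanSpace ℝ (Fin (n + 1))) (hw : w ≠ 0) :
    uniformBallR (n + 1) R {b | |inner ℝ w b| ≤ ρ}
      ≤ ENNReal.ofReal (2 * ρ * (ballVol n R / ballVol (n + 1) R) / ‖w‖) := by
  have hw0 : 0 < ‖w‖ := norm_pos_iff.2 hw
  have h := lintegral_uniformBallR_inner_le n hR (‖w‖⁻¹ • w) (by simp [norm_smul, hw0.ne'])
    ((Set.Icc (-(ρ / ‖w‖)) (ρ / ‖w‖)).indicator 1) (measurable_one.indicator measurableSet_Icc)
  have hset : {b | |inner ℝ w b| ≤ ρ} =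
      (fun b : EuclideanSpace ℝ (Fin (n + 1)) => inner ℝ (‖w‖⁻¹ • w) b) ⁻¹'
        Set.Icc (-(ρ / ‖w‖)) (ρ / ‖w‖) := by
    ext b
    simp only [Set.mem_ofPred_eq, Set.mem_preimage, Set.mem_Icc, ← abs_le, real_inner_smul_left,
      abs_mul, abs_inv, abs_norm]
    rw [le_div_iff₀ hw0, mul_comm, mul_inv_cancel_left₀ hw0.ne']
  calc _ = ∫⁻ b, (Set.Icc (-(ρ / ‖w‖)) (ρ / ‖w‖)).indicator 1 (inner ℝ (‖w‖⁻¹ • w) b)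
        ∂(uniformBallR (n + 1) R) := by
        rw [hset, ← lintegral_indicator_one (measurableSet_Icc.preimage (by fun_prop))]
        rfl
    _ ≤ _ := h
    _ ≤ ENNReal.ofReal (ballVol n R / ballVol (n + 1) R) *
          ENNReal.ofReal (ρ / ‖w‖ - -(ρ / ‖w‖)) := by
        gcongr
        rw [← Real.volume_Icc, ← lintegral_indicator_one measurableSet_Icc]
        exact setLIntegral_le_lintegral _ _
    _ = _ := by
        rw [← ENNReal.ofReal_mul (div_pos (ballVol_pos _ hR) (ballVol_pos _ hR)).le]
        congr 1
        ring

lemma lintegral_truncated_inv_le {R t₀ k : ℝ} (ht₀ : 0 < t₀) (htR : t₀ ≤ R) (hk : 0 ≤ k) :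
    ∫⁻ t in Set.Icc (-R) R, (if |t| ≤ t₀ then 1 else ENNReal.ofReal (k / |t|))
      ≤ ENNReal.ofReal (2 * (t₀ + k * Real.log (R / t₀))) := by
  have hlog : 0 ≤ Real.log (R / t₀) := Real.log_nonneg ((one_le_div ht₀).2 htR)
  have hpos : ∫⁻ t in Set.Ioc t₀ R, ENNReal.ofReal (k / |t|) =
      ENNReal.ofReal (k * Real.log (R / t₀)) := by
    have hint : IntervalIntegrable (fun t : ℝ => k * t⁻¹) volume t₀ R :=
      (intervalIntegrable_inv_iff.2 (Or.inr (by
        rw [Set.uIcc_of_le htR]; exact fun h => (ht₀.trans_le h.1).false))).const_mul k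
    rw [← integral_inv_of_pos ht₀ (ht₀.trans_le htR), ← intervalIntegral.integral_const_mul,
      intervalIntegral.integral_of_le htR, ofReal_integral_eq_lintegral_ofReal
        ((intervalIntegrable_iff_integrableOn_Ioc_of_le htR).1 hint)]
    · refine setLIntegral_congr_fun measurableSet_Ioc fun t ht => ?_
      simp only [abs_of_pos (ht₀.trans ht.1), div_eq_mul_inv]
    · filter_upwards [ae_restrict_mem measurableSet_Ioc] with t ht
      have := ht₀.trans ht.1
      positivity
  have hneg : ∫⁻ t in Set.Ico (-R) (-t₀), ENNReal.ofReal (k / |t|) =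
      ENNReal.ofReal (k * Real.log (R / t₀)) := by
    rw [← hpos, ← (Measure.measurePreserving_neg (volume : Measure ℝ)).setLIntegral_comp_preimage_emb
      (MeasurableEquiv.neg ℝ).measurableEmbedding]
    simp
  have hsub : Set.Icc (-R) R ⊆
      Set.Icc (-t₀) t₀ ∪ (Set.Ioc t₀ R ∪ Set.Ico (-R) (-t₀)) := by
    intro t ht
    rcases lt_or_ge t (-t₀) with h | h
    · exact Or.inr (Or.inr ⟨ht.1, h⟩)
    · rcases le_or_gt t t₀ with h' | h'
      · exact Or.inl ⟨h, h'⟩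
      · exact Or.inr (Or.inl ⟨h', ht.2⟩)
  set F : ℝ → ENNReal := fun t => if |t| ≤ t₀ then 1 else ENNReal.ofReal (k / |t|) with hF
  have h0 : ∫⁻ t in Set.Icc (-t₀) t₀, F t = ENNReal.ofReal (2 * t₀) := by
    rw [setLIntegral_congr_fun (g := fun _ => 1) measurableSet_Icc
      fun t ht => if_pos (abs_le.2 ht), setLIntegral_one, Real.volume_Icc]
    congr 1; ring
  have h1 : ∫⁻ t in Set.Ioc t₀ R, F t = ENNReal.ofReal (k * Real.log (R / t₀)) := by
    rw [← hpos]
    exact setLIntegral_congr_fun measurableSet_Ioc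
      fun t ht => if_neg (not_le.2 (ht.1.trans_le (le_abs_self t)))
  have h2 : ∫⁻ t in Set.Ico (-R) (-t₀), F t = ENNReal.ofReal (k * Real.log (R / t₀)) := by
    rw [← hneg]
    exact setLIntegral_congr_fun measurableSet_Ico
      fun t ht => if_neg (not_le.2 (by linarith [neg_le_abs t, ht.2]))
  calc ∫⁻ t in Set.Icc (-R) R, F t
      ≤ ∫⁻ t in Set.Icc (-t₀) t₀ ∪ (Set.Ioc t₀ R ∪ Set.Ico (-R) (-t₀)), F t :=
        lintegral_mono_set hsub
    _ ≤ (∫⁻ t in Set.Icc (-t₀) t₀, F t) +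
        ((∫⁻ t in Set.Ioc t₀ R, F t) + ∫⁻ t in Set.Ico (-R) (-t₀), F t) :=
        (lintegral_union_le _ _ _).trans (by gcongr; exact lintegral_union_le _ _ _)
    _ = _ := by
        rw [h0, h1, h2, ← ENNReal.ofReal_add (by positivity) (by positivity),
          ← ENNReal.ofReal_add (by positivity) (by positivity)]
        congr 1; ring

/-- The operator norm is attained on the unit sphere, by compactness. -/
lemma exists_norm_eq_one_norm_apply_eq {E F : Type*} [NormedAddCommGroup E] [NormedSpace ℝ E]
    [FiniteDimensional ℝ E] [Nontrivial E] [NormedAddCommGroup F] [NormedSpace ℝ F]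
    (T : E →L[ℝ] F) : ∃ v, ‖v‖ = 1 ∧ ‖T v‖ = ‖T‖ := by
  obtain ⟨v, hv, hmax⟩ := (isCompact_sphere (0 : E) 1).exists_sSup_image_eq
    (NormedSpace.sphere_nonempty.2 zero_le_one) (f := fun x => ‖T x‖) (by fun_prop)
  exact ⟨v, by simpa using hv, by rw [← hmax, T.sSup_sphere_eq_norm]⟩

/-- Concentration bound (real case): if `ℓ ≤ ‖M‖₂ ≤ L` and `a, b` are independent uniform
random vectors on balls of radius `R`, then for `0 < ρ ≤ ℓR²`,
`ℙ[|aᵀ M b| ≤ ρ] ≤ ρ · (4 V_{m1-1}(R) V_{m2-1}(R)) / (ℓ V_{m1}(R) V_{m2}(R)) · (1 + ln(LR²/ρ))`. -/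
theorem concentration_real (m1 m2 : ℕ) (hm1 : 0 < m1) (hm2 : 0 < m2)
    (R : ℝ) (hR : 0 < R) (l L : ℝ) (hl : 0 < l) (hlL : l ≤ L)
    (M : Matrix (Fin m1) (Fin m2) ℝ) (hMl : l ≤ specNormR M) (hML : specNormR M ≤ L)
    (ρ : ℝ) (hρ0 : 0 < ρ) (hρ : ρ ≤ l * R ^ 2) :
    ((uniformBallR m1 R).prod (uniformBallR m2 R))
      {ab : EuclideanSpace ℝ (Fin m1) × EuclideanSpace ℝ (Fin m2) |
        |∑ i : Fin m1, ∑ j : Fin m2, ab.1 i * M i j * ab.2 j| ≤ ρ}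
      ≤ ENNReal.ofReal
        (ρ * (4 * ballVol (m1 - 1) R * ballVol (m2 - 1) R) /
            (l * ballVol m1 R * ballVol m2 R) * (1 + Real.log (L * R ^ 2 / ρ))) := by
  obtain ⟨n1, rfl⟩ := Nat.exists_eq_add_one.2 hm1
  obtain ⟨n2, rfl⟩ := Nat.exists_eq_add_one.2 hm2
  simp only [Nat.add_sub_cancel]
  have hP1 := isProbabilityMeasure_uniformBallR (n1 + 1) hR
  have hP2 := isProbabilityMeasure_uniformBallR (n2 + 1) hR
  set T := LinearMap.toContinuousLinearMap (Matrix.toEuclideanLin M) with hT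
  set σ := specNormR M with hσ
  have hσ0 : 0 < σ := hl.trans_le hMl
  obtain ⟨v, hv, hTv⟩ := exists_norm_eq_one_norm_apply_eq T
  change ‖T v‖ = σ at hTv
  set u := σ⁻¹ • T v with hu
  have hu1 : ‖u‖ = 1 := by
    rw [hu, norm_smul, hTv, norm_inv, Real.norm_of_nonneg hσ0.le, inv_mul_cancel₀ hσ0.ne']
  have hform : ∀ (a : EuclideanSpace ℝ (Fin (n1 + 1))) (b : EuclideanSpace ℝ (Fin (n2 + 1))),
      ∑ i, ∑ j, a i * M i j * b j = inner ℝ (T.adjoint a) b := by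
    intro a b
    rw [ContinuousLinearMap.adjoint_inner_left, PiLp.inner_apply]
    refine Finset.sum_congr rfl fun i _ => ?_
    simp [hT, Matrix.toLpLin_apply, Matrix.mulVec, dotProduct, Finset.mul_sum, mul_comm,
      mul_left_comm, mul_assoc]
  have hnorm : ∀ a, σ * |inner ℝ u a| ≤ ‖T.adjoint a‖ := by
    intro a
    have h : inner ℝ (T.adjoint a) v = σ * inner ℝ u a := by
      rw [ContinuousLinearMap.adjoint_inner_left, hu, real_inner_smul_left, real_inner_comm,
        mul_inv_cancel_left₀ hσ0.ne']
    calc _ = |inner ℝ (T.adjoint a) v| := by rw [h, abs_mul, abs_of_pos hσ0]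
      _ ≤ ‖T.adjoint a‖ * ‖v‖ := abs_real_inner_le_norm _ _
      _ = _ := by rw [hv, mul_one]
  set c1 := ballVol n1 R / ballVol (n1 + 1) R with hc1
  set c2 := ballVol n2 R / ballVol (n2 + 1) R with hc2
  have hc1p : 0 < c1 := div_pos (ballVol_pos _ hR) (ballVol_pos _ hR)
  have hc2p : 0 < c2 := div_pos (ballVol_pos _ hR) (ballVol_pos _ hR)
  -- For fixed `a` with `⟪u, a⟫ = t`, the slab bound on the probability in `b` is `k / |t|`. It is
  -- replaced by the trivial bound `1` for `|t| ≤ t₀`; the cutoff `t₀ ≤ k` is chosen so that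
  -- `R / t₀ = σ R² / ρ` is exactly the argument of the logarithm.
  set k := 2 * ρ * c2 / σ with hk
  have hk0 : 0 < k := by positivity
  set t₀ := ρ / (σ * R) with ht
  have ht0 : 0 < t₀ := by positivity
  have htR : t₀ ≤ R := by
    rw [ht, div_le_iff₀ (by positivity)]
    nlinarith [mul_le_mul_of_nonneg_right hMl (sq_nonneg R)]
  have htk : t₀ ≤ k := by
    have : k = t₀ * (2 * R * c2) := by rw [hk, ht]; field_simp
    rw [this]
    exact le_mul_of_one_le_right ht0.le (one_le_ballVol_ratio n2 hR)
  set F : ℝ → ENNReal := fun t => if |t| ≤ t₀ then 1 else ENNReal.ofReal (k / |t|) with hF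
  have hFm : Measurable F :=
    Measurable.ite (measurableSet_le (by fun_prop) measurable_const) measurable_const
      (by fun_prop)
  have hslice : ∀ a, uniformBallR (n2 + 1) R {b | |inner ℝ (T.adjoint a) b| ≤ ρ} ≤
      F (inner ℝ u a) := by
    intro a
    by_cases h : |inner ℝ u a| ≤ t₀
    · rw [hF]; simp only [if_pos h]; exact prob_le_one
    · rw [hF]
      simp only [if_neg h]
      have hpos : 0 < |inner ℝ u a| := ht0.trans (not_le.1 h)
      have hw : 0 < ‖T.adjoint a‖ := (mul_pos hσ0 hpos).trans_le (hnorm a)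
      refine (uniformBallR_slab_le n2 hR _ (norm_pos_iff.1 hw)).trans
        (ENNReal.ofReal_le_ofReal ?_)
      rw [hk, div_div]
      gcongr
      exact hnorm a
  have hlog0 : 0 ≤ Real.log (R / t₀) := Real.log_nonneg ((one_le_div ht0).2 htR)
  have hlog : Real.log (R / t₀) ≤ Real.log (L * R ^ 2 / ρ) := by
    refine Real.log_le_log (by positivity) ?_
    have : R / t₀ = σ * R ^ 2 / ρ := by rw [ht]; field_simp
    rw [this]
    gcongr
  simp only [hform]
  rw [Measure.prod_apply (measurableSet_le (by fun_prop) measurable_const)]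
  calc _ ≤ ∫⁻ a, F (inner ℝ u a) ∂(uniformBallR (n1 + 1) R) := lintegral_mono hslice
    _ ≤ ENNReal.ofReal c1 * ∫⁻ t in Set.Icc (-R) R, F t :=
        lintegral_uniformBallR_inner_le n1 hR u hu1 F hFm
    _ ≤ ENNReal.ofReal c1 * ENNReal.ofReal (2 * (t₀ + k * Real.log (R / t₀))) := by
        gcongr
        exact lintegral_truncated_inv_le ht0 htR hk0.le
    _ = ENNReal.ofReal (c1 * (2 * (t₀ + k * Real.log (R / t₀)))) :=
        (ENNReal.ofReal_mul hc1p.le).symm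
    _ ≤ _ := by
        refine ENNReal.ofReal_le_ofReal ?_
        calc _ ≤ c1 * (2 * (k + k * Real.log (L * R ^ 2 / ρ))) := by gcongr
          _ = 4 * ρ * c1 * c2 * (1 + Real.log (L * R ^ 2 / ρ)) / σ := by rw [hk]; ring
          _ ≤ 4 * ρ * c1 * c2 * (1 + Real.log (L * R ^ 2 / ρ)) / l := by
              have := hlog0.trans hlog
              gcongr
          _ = _ := by
              rw [hc1, hc2]
              have := ballVol_pos (n1 + 1) hR
              have := ballVol_pos (n2 + 1) hR
              field_simp
end
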